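/- Let K ⊆ ℝ^d be a convex body and let ℓ = [0,1] ⊆ ℝ be a line segment. Then the 1-codimensional cylinder K × [0,1] ⊆ ℝ^d × ℝ satisfies coin(K × [0,1]) = 4·N_{1/2}(K). -/

import Mathlib

open Set Pointwise

section Defs

variable {V : Type*} [NormedAddCommGroup V] [NormedSpace ℝ V]

/-- A convex body: compact, convex, with nonempty interior. -/
def IsConvexBody (K : Set V) : Prop :=
  IsCompact K ∧ Convex ℝ K ∧ (interior K).Nonempty

/-- `K` can be covered by `m` homothets of ratio `lam`. -/
def CoversWith (K : Set V) (lam : ℝ) (m : ℕ) : Prop :=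
  ∃ t : Fin m → V, K ⊆ ⋃ i, (fun x => lam • x + t i) '' K

/-- The `m`-covering number `γ_m(K)`. -/
noncomputable def gammaC (m : ℕ) (K : Set V) : ℝ :=
  sInf {lam : ℝ | 0 < lam ∧ CoversWith K lam m}

/-- The covering index `coin(K)`. -/
noncomputable def coin (K : Set V) : ℝ :=
  sInf {r : ℝ | ∃ m : ℕ, 0 < m ∧ gammaC m K ≤ 1 / 2 ∧ r = (m : ℝ) / (1 - gammaC m K)}

/-- The weak covering index `wcoin(K)`. -/
noncomputable def wcoin (K : Set V) : ℝ :=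
  sInf {r : ℝ | ∃ m : ℕ, 0 < m ∧ gammaC m K < 1 ∧ r = (m : ℝ) / (1 - gammaC m K)}

/-- `N_λ(K)`: the least number of translates of `λ • K` needed to cover `K`. -/
noncomputable def covN (lam : ℝ) (K : Set V) : ℕ :=
  sInf {n : ℕ | CoversWith K lam n}

/-- A convex body is tightly covered if for every `0 < λ < 1` it contains `N_λ(K)`
points no two of which lie in a common homothet `λ • K + t`. -/
def TightlyCovered (K : Set V) : Prop :=
  ∀ lam : ℝ, 0 < lam → lam < 1 →
    ∃ p : Fin (covN lam K) → V, (∀ i, p i ∈ K) ∧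
      ∀ i j, i ≠ j → ∀ t : V,
        ¬(p i ∈ (fun x => lam • x + t) '' K ∧ p j ∈ (fun x => lam • x + t) '' K)

/-- The covering parameter `C(K)` of Swanepoel. -/
noncomputable def covParam (K : Set V) : ℝ :=
  sInf {r : ℝ | ∃ k : ℕ, ∃ lam : Fin k → ℝ, ∃ t : Fin k → V,
    (∀ i, 0 < lam i ∧ lam i < 1) ∧
    (K ⊆ ⋃ i, (fun x => lam i • x + t i) '' K) ∧
    r = ∑ i, 1 / (1 - lam i)}

/-- The (multiplicative) Banach–Mazur distance. -/
noncomputable def distBM {d : ℕ} (K L : Set (Fin d → ℝ)) : ℝ :=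
  sInf {δ : ℝ | 1 ≤ δ ∧ ∃ T : (Fin d → ℝ) ≃ₗ[ℝ] (Fin d → ℝ), ∃ a ∈ K, ∃ b ∈ L,
    (fun x => x - b) '' L ⊆ T '' ((fun x => x - a) '' K) ∧
    T '' ((fun x => x - a) '' K) ⊆ δ • ((fun x => x - b) '' L)}

end Defs

/-!
For `s ∈ [0, 1]`, the members of a cover of `K × [0, 1]` by `m` homothets of ratio `λ` that meet the
slice `K × {s}` restrict to a cover of `K` by homothets of ratio `λ`, so there are at least `N_λ(K)`
of them. Each homothet meets slices over an interval of length `λ` only, and integrating over `s`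
gives `N_λ(K) ≤ m λ`. A compactness argument allows `λ = γ_m(K × [0, 1])`; when this is at most
`1 / 2`, it follows that `4 N_{1/2}(K) ≤ 4 m λ ≤ m / (1 - λ)`, because `4 λ (1 - λ) ≤ 1`. Stacking
two layers of height `1 / 2` over an optimal cover of `K` shows that the bound is attained with
`m = 2 N_{1/2}(K)`.
-/

section Cylinder

open MeasureTheory Module

variable {V W : Type*} [NormedAddCommGroup V] [NormedSpace ℝ V] [NormedAddCommGroup W]
  [NormedSpace ℝ W] {K : Set V} {L : Set W} {x : V} {lam mu : ℝ} {m n : ℕ}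

theorem coversWith_iff :
    CoversWith K lam m ↔ ∃ t : Fin m → V, ∀ x ∈ K, ∃ i, ∃ y ∈ K, lam • y + t i = x := by
  simp only [CoversWith, subset_def, mem_iUnion, mem_image]

theorem coversWith_natCard {ι : Type*} [Finite ι] (t : ι → V)
    (h : ∀ x ∈ K, ∃ i, ∃ y ∈ K, lam • y + t i = x) : CoversWith K lam (Nat.card ι) := by
  let e := Finite.equivFin ι
  refine coversWith_iff.2 ⟨t ∘ e.symm, fun x hx => ?_⟩
  obtain ⟨i, y, hy, hxy⟩ := h x hx
  exact ⟨e i, y, hy, by simpa using hxy⟩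

theorem coversWith_one (hm : 0 < m) : CoversWith K 1 m :=
  coversWith_iff.2 ⟨0, fun x hx => ⟨⟨0, hm⟩, x, hx, by simp⟩⟩

theorem CoversWith.pos (h : CoversWith K lam m) (hne : K.Nonempty) : 0 < m := by
  obtain ⟨t, ht⟩ := coversWith_iff.1 h
  obtain ⟨x, hx⟩ := hne
  obtain ⟨i, -⟩ := ht x hx
  exact i.pos

theorem CoversWith.mono (h : CoversWith K lam m) (hK : StarConvex ℝ x K) (hlam : 0 ≤ lam)
    (hle : lam ≤ mu) : CoversWith K mu m := by
  rcases hle.eq_or_lt with rfl | hlt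
  · exact h
  have hmu : 0 < mu := hlam.trans_lt hlt
  obtain ⟨t, ht⟩ := coversWith_iff.1 h
  refine coversWith_iff.2 ⟨fun i => t i - (mu - lam) • x, fun y hy => ?_⟩
  obtain ⟨i, z, hz, rfl⟩ := ht y hy
  have hmem : (1 - lam / mu) • x + (lam / mu) • z ∈ K :=
    hK hz (sub_nonneg.2 ((div_le_one hmu).2 hle)) (by positivity) (by ring)
  have hsmul : mu • ((1 - lam / mu) • x + (lam / mu) • z) = (mu - lam) • x + lam • z := by
    rw [smul_add, smul_smul, smul_smul, mul_one_sub, mul_div_cancel₀ _ hmu.ne']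
  exact ⟨i, _, hmem, by rw [hsmul]; module⟩

theorem CoversWith.prod (hK : CoversWith K lam m) (hL : CoversWith L lam n) :
    CoversWith (K ×ˢ L) lam (m * n) := by
  obtain ⟨t, ht⟩ := coversWith_iff.1 hK
  obtain ⟨u, hu⟩ := coversWith_iff.1 hL
  have hcover := coversWith_natCard (K := K ×ˢ L) (lam := lam)
    (fun p : Fin m × Fin n => (t p.1, u p.2)) ?_
  · simpa using hcover
  · rintro ⟨x, y⟩ ⟨hx, hy⟩
    obtain ⟨i, x', hx', hxi⟩ := ht x hx
    obtain ⟨j, y', hy', hyj⟩ := hu y hy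
    exact ⟨(i, j), (x', y'), ⟨hx', hy'⟩, Prod.ext hxi hyj⟩

theorem coversWith_half_unitInterval : CoversWith (Icc (0 : ℝ) 1) (1 / 2) 2 := by
  refine coversWith_iff.2 ⟨![0, 1 / 2], fun s hs => ?_⟩
  rcases le_total s (1 / 2) with h | h
  · exact ⟨0, 2 * s, ⟨by linarith [hs.1], by linarith⟩, by simp⟩
  · exact ⟨1, 2 * s - 1, ⟨by linarith, by linarith [hs.2]⟩, by simp; ring⟩

theorem exists_coversWith (hK : IsCompact K) (hint : (interior K).Nonempty) (hlam : lam ≠ 0) :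
    ∃ m, CoversWith K lam m := by
  have hint' : (interior (lam • K)).Nonempty := by
    rw [interior_smul₀ hlam]
    exact hint.smul_set
  obtain ⟨T, hT⟩ := compact_covered_by_add_left_translates hK hint'
  refine ⟨_, coversWith_natCard (fun g : T => -(g : V)) fun x hx => ?_⟩
  obtain ⟨g, hg, y, hy, hxy⟩ := mem_iUnion₂.1 (hT hx)
  exact ⟨⟨g, hg⟩, y, hy, add_neg_eq_of_eq_add (hxy.trans (add_comm g x))⟩

-- A homothet of `K` that meets `K` is translated by some `x - lam • y` with `x, y ∈ K`; taking the
-- pairs `(x, y)` as parameters makes the parameter space compact and independent of `lam`.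
theorem coversWith_iff_exists_sub_smul (hne : K.Nonempty) :
    CoversWith K lam m ↔
      ∃ p : Fin m → K × K, ∀ x ∈ K, ∃ i, ∃ y : K,
        lam • (y : V) + ((p i).1 - lam • (p i).2 : V) = x := by
  rw [coversWith_iff]
  refine ⟨fun ⟨t, ht⟩ => ?_, fun ⟨p, hp⟩ => ⟨fun i => (p i).1 - lam • (p i).2, fun x hx => ?_⟩⟩
  · have : Nonempty K := hne.to_subtype
    have hp (i) : ∃ q : K × K,
        (∃ x ∈ K, ∃ y ∈ K, lam • y + t i = x) → (q.1 - lam • q.2 : V) = t i := by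
      by_cases h : ∃ x ∈ K, ∃ y ∈ K, lam • y + t i = x
      · obtain ⟨x, hx, y, hy, hxy⟩ := h
        exact ⟨(⟨x, hx⟩, ⟨y, hy⟩), fun _ => sub_eq_of_eq_add' hxy.symm⟩
      · exact ⟨Classical.arbitrary _, fun h' => (h h').elim⟩
    choose p hp using hp
    refine ⟨p, fun x hx => ?_⟩
    obtain ⟨i, y, hy, hxy⟩ := ht x hx
    exact ⟨i, ⟨y, hy⟩, by rw [hp i ⟨x, hx, y, hy, hxy⟩, hxy]⟩
  · obtain ⟨i, y, hxy⟩ := hp x hx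
    exact ⟨i, y, y.2, hxy⟩

theorem isClosed_setOf_coversWith (hK : IsCompact K) : IsClosed {lam : ℝ | CoversWith K lam m} := by
  rcases K.eq_empty_or_nonempty with rfl | hne
  · simp [coversWith_iff]
  have : CompactSpace K := isCompact_iff_compactSpace.1 hK
  let S (x : V) (i : Fin m) : Set ((ℝ × (Fin m → K × K)) × K) :=
    {q | q.1.1 • (q.2 : V) + ((q.1.2 i).1 - q.1.1 • (q.1.2 i).2 : V) = x}
  have hS (x i) : IsClosed (Prod.fst '' S x i) :=
    isClosedMap_fst_of_compactSpace _ (isClosed_eq (by fun_prop) continuous_const)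
  have hclosed : IsClosed (⋂ x ∈ K, ⋃ i, Prod.fst '' S x i) :=
    isClosed_biInter fun x _ => isClosed_iUnion_of_finite (hS x)
  convert isClosedMap_fst_of_compactSpace _ hclosed using 1
  ext lam
  simp [coversWith_iff_exists_sub_smul hne, S]

theorem covN_le (h : CoversWith K lam m) : covN lam K ≤ m :=
  Nat.sInf_le h

theorem coversWith_covN (h : ∃ m, CoversWith K lam m) : CoversWith K lam (covN lam K) :=
  Nat.sInf_mem h

theorem gammaC_nonneg : 0 ≤ gammaC m K :=
  Real.sInf_nonneg fun _ h => h.1.le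

theorem gammaC_le (hlam : 0 < lam) (h : CoversWith K lam m) : gammaC m K ≤ lam :=
  csInf_le ⟨0, fun _ h => h.1.le⟩ ⟨hlam, h⟩

theorem coversWith_gammaC (hK : IsCompact K) (hm : 0 < m) : CoversWith K (gammaC m K) m := by
  have hmem : gammaC m K ∈ closure {lam : ℝ | 0 < lam ∧ CoversWith K lam m} :=
    csInf_mem_closure ⟨1, one_pos, coversWith_one hm⟩ ⟨0, fun _ h => h.1.le⟩
  exact closure_minimal (fun _ h => h.2) (isClosed_setOf_coversWith hK) hmem

theorem coin_le_two_mul (hm : 0 < m) (h : CoversWith K (1 / 2) m) : coin K ≤ 2 * m := by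
  have hgamma : gammaC m K ≤ 1 / 2 := gammaC_le (by norm_num) h
  calc coin K ≤ m / (1 - gammaC m K) := by
        refine csInf_le ⟨0, ?_⟩ ⟨m, hm, hgamma, rfl⟩
        rintro _ ⟨k, -, hk, rfl⟩
        exact div_nonneg k.cast_nonneg (by linarith)
    _ ≤ m / (1 / 2) := by gcongr; linarith
    _ = 2 * m := by ring

theorem le_coin {r : ℝ} (hm : 0 < m) (h : CoversWith K (1 / 2) m)
    (hr : ∀ k : ℕ, 0 < k → gammaC k K ≤ 1 / 2 → r ≤ k / (1 - gammaC k K)) : r ≤ coin K := by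
  refine le_csInf ⟨_, m, hm, gammaC_le (by norm_num) h, rfl⟩ ?_
  rintro _ ⟨k, hk, hgamma, rfl⟩
  exact hr k hk hgamma

theorem mul_measure_le_sum_measure {α ι : Type*} [MeasurableSpace α] [Fintype ι] (μ : Measure α)
    {A : ι → Set α} (hA : ∀ i, MeasurableSet (A i)) {s : Set α}
    (hs : ∀ a ∈ s, n ≤ Nat.card {i // a ∈ A i}) : n * μ s ≤ ∑ i, μ (A i) := by
  classical
  let f : α → ENNReal := fun a => ∑ i, (A i).indicator 1 a
  have hf : Measurable f :=
    Finset.measurable_fun_sum _ fun i _ => measurable_one.indicator (hA i)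
  have hsub : s ⊆ {a | n ≤ f a} := fun a ha => by
    have hcard : f a = Nat.card {i // a ∈ A i} := by
      simp [f, indicator_apply, Fintype.card_subtype]
    simpa [hcard] using hs a ha
  calc n * μ s ≤ n * μ {a | n ≤ f a} := by gcongr
    _ ≤ ∫⁻ a, f a ∂μ := mul_meas_ge_le_lintegral hf n
    _ = ∑ i, ∫⁻ a, (A i).indicator 1 a ∂μ :=
        lintegral_finsetSum _ fun i _ => measurable_one.indicator (hA i)
    _ = ∑ i, μ (A i) := by simp only [lintegral_indicator_one (hA _)]

theorem coversWith_slice {ι : Type*} [Finite ι] {t : ι → V × W}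
    (ht : ∀ z ∈ K ×ˢ L, ∃ i, ∃ w ∈ K ×ˢ L, lam • w + t i = z) {s : W} (hs : s ∈ L) :
    CoversWith K lam (Nat.card {i // s ∈ (fun y => lam • y + (t i).2) '' L}) := by
  refine coversWith_natCard (fun i => (t i).1) fun x hx => ?_
  obtain ⟨i, w, ⟨hw₁, hw₂⟩, hwz⟩ := ht (x, s) ⟨hx, hs⟩
  exact ⟨⟨i, w.2, hw₂, congrArg Prod.snd hwz⟩, w.1, hw₁, congrArg Prod.fst hwz⟩

theorem measure_image_smul_add [MeasurableSpace W] [BorelSpace W] [FiniteDimensional ℝ W]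
    (μ : Measure W) [μ.IsAddHaarMeasure] (t : W) :
    μ ((fun y => lam • y + t) '' L) = ENNReal.ofReal |lam ^ finrank ℝ W| * μ L := by
  rw [← Measure.addHaar_smul, ← measure_preimage_add_right μ (-t) (lam • L), ← image_add_right,
    ← image_smul, image_image]

theorem CoversWith.le_mul_of_prod [MeasurableSpace W] [BorelSpace W] [FiniteDimensional ℝ W]
    (μ : Measure W) [μ.IsAddHaarMeasure] (hL : IsCompact L) (hpos : μ L ≠ 0)
    (h : CoversWith (K ×ˢ L) lam m) (hn : ∀ k, CoversWith K lam k → n ≤ k) :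
    (n : ℝ) ≤ m * |lam ^ finrank ℝ W| := by
  obtain ⟨t, ht⟩ := coversWith_iff.1 h
  let A (i : Fin m) : Set W := (fun y => lam • y + (t i).2) '' L
  have hA (i) : MeasurableSet (A i) := (hL.image (by fun_prop)).measurableSet
  have hcount : n * μ L ≤ ∑ i, μ (A i) :=
    mul_measure_le_sum_measure μ hA fun s hs => hn _ (coversWith_slice ht hs)
  have hle : (n : ENNReal) ≤ m * ENNReal.ofReal |lam ^ finrank ℝ W| := by
    rw [← ENNReal.mul_le_mul_iff_left hpos hL.measure_ne_top]
    simpa [A, measure_image_smul_add, mul_assoc] using hcount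
  simpa using ENNReal.toReal_mono (by finiteness) hle

theorem CoversWith.cylinder (h : CoversWith K (1 / 2) m) :
    CoversWith (K ×ˢ Icc (0 : ℝ) 1) (1 / 2) (m * 2) :=
  h.prod coversWith_half_unitInterval

theorem covN_half_le_mul_gammaC (hK : IsCompact K) (hstar : StarConvex ℝ x K) (hm : 0 < m)
    (hgamma : gammaC m (K ×ˢ Icc (0 : ℝ) 1) ≤ 1 / 2) :
    (covN (1 / 2) K : ℝ) ≤ m * gammaC m (K ×ˢ Icc (0 : ℝ) 1) := by
  have hcov := coversWith_gammaC (hK.prod (isCompact_Icc (a := (0 : ℝ)) (b := 1))) hm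
  have hle := hcov.le_mul_of_prod volume isCompact_Icc (by simp)
    fun k hk => covN_le (hk.mono hstar gammaC_nonneg hgamma)
  simpa [abs_of_nonneg gammaC_nonneg] using hle

theorem four_mul_covN_half_le_div (hK : IsCompact K) (hstar : StarConvex ℝ x K) (hm : 0 < m)
    (hgamma : gammaC m (K ×ˢ Icc (0 : ℝ) 1) ≤ 1 / 2) :
    4 * (covN (1 / 2) K : ℝ) ≤ m / (1 - gammaC m (K ×ˢ Icc (0 : ℝ) 1)) := by
  have hcov := covN_half_le_mul_gammaC hK hstar hm hgamma
  set g := gammaC m (K ×ˢ Icc (0 : ℝ) 1)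
  have hg : 0 ≤ 1 - g := by linarith
  rw [le_div_iff₀ (by linarith)]
  calc 4 * (covN (1 / 2) K : ℝ) * (1 - g) ≤ 4 * (m * g) * (1 - g) := by gcongr
    _ = m * (1 - (1 - 2 * g) ^ 2) := by ring
    _ ≤ m := mul_le_of_le_one_right m.cast_nonneg (by linarith [sq_nonneg (1 - 2 * g)])

theorem coin_cylinder_general (hK : IsCompact K) (hne : K.Nonempty) (hstar : StarConvex ℝ x K)
    (hfin : ∃ m, CoversWith K (1 / 2) m) :
    coin (K ×ˢ Icc (0 : ℝ) 1) = 4 * (covN (1 / 2) K : ℝ) := by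
  have hcov : CoversWith K (1 / 2) (covN (1 / 2) K) := coversWith_covN hfin
  have hpos : 0 < covN (1 / 2) K * 2 := mul_pos (hcov.pos hne) two_pos
  apply le_antisymm
  · calc coin (K ×ˢ Icc (0 : ℝ) 1) ≤ 2 * (covN (1 / 2) K * 2 : ℕ) :=
          coin_le_two_mul hpos hcov.cylinder
      _ = 4 * (covN (1 / 2) K : ℝ) := by push_cast; ring
  · exact le_coin hpos hcov.cylinder fun k hk => four_mul_covN_half_le_div hK hstar hk

end Cylinder

/-- covering index of a 1-codimensional cylinder. -/
theorem coin_cylinder (d : ℕ) (K : Set (Fin d → ℝ)) (hK : IsConvexBody K) :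
    coin (K ×ˢ Set.Icc (0 : ℝ) 1) = 4 * (covN (1 / 2 : ℝ) K : ℝ) := by
  obtain ⟨x, hx⟩ := hK.2.2.mono interior_subset
  exact coin_cylinder_general hK.1 ⟨x, hx⟩ (hK.2.1.starConvex hx)
    (exists_coversWith hK.1 hK.2.2 (by norm_num))
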